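/- Let n, k, l be integers with 1 ≤ k ≤ l, 2l < n and gcd(k,l) = 1. Then the Jacobian group Jac(I(n,k,l)) is not cyclic: there is no single element x of Jac(I(n,k,l)) whose ℤ-span is the whole group. In particular the minimum number of generators of Jac(I(n,k,l)) is at least 2. -/

import Mathlib

open Polynomial

/-- The relation generating the I-graph `I(n,k,l)`: `u_i ~ u_{i+l}`, `v_i ~ v_{i+k}`,
`u_i ~ v_i` (the left summand are the `u`'s with step `l`, the right summand the `v`'s
with step `k`). -/
def IRel (n k l : ℕ) : (ZMod n ⊕ ZMod n) → (ZMod n ⊕ ZMod n) → Prop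
  | .inl i, .inl j => j = i + (l : ZMod n)
  | .inr i, .inr j => j = i + (k : ZMod n)
  | .inl i, .inr j => i = j
  | .inr _, .inl _ => False

/-- The I-graph `I(n,k,l)`. -/
def IGraph (n k l : ℕ) : SimpleGraph (ZMod n ⊕ ZMod n) :=
  SimpleGraph.fromRel (IRel n k l)

noncomputable instance (n k l : ℕ) : DecidableRel (IGraph n k l).Adj :=
  fun _ _ => Classical.dec _

/-- The number of spanning trees of the I-graph `I(n,k,l)`. -/
noncomputable def tauI (n k l : ℕ) : ℕ :=
  Nat.card {H : (IGraph n k l).Subgraph // H.IsSpanning ∧ H.coe.IsTree}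

/-- The Laplacian matrix `L = D - A` of the I-graph, with entries in `R`. -/
noncomputable def lapI (n k l : ℕ) [NeZero n] (R : Type) [AddGroupWithOne R] :
    Matrix (ZMod n ⊕ ZMod n) (ZMod n ⊕ ZMod n) R :=
  (IGraph n k l).lapMatrix R

/-- The cokernel of a square integer matrix, viewed as a `ℤ`-linear map. -/
abbrev cokerM {m : Type} [Fintype m] [DecidableEq m] (M : Matrix m m ℤ) : Type :=
  (m → ℤ) ⧸ LinearMap.range M.mulVecLin

/-- The polynomial `F(X) = (3X^k - X^{2k} - 1)(3X^l - X^{2l} - 1) - X^{k+l}`. -/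
noncomputable def FpolyI (k l : ℕ) : Polynomial ℤ :=
  (3 * X ^ k - X ^ (2 * k) - 1) * (3 * X ^ l - X ^ (2 * l) - 1) - X ^ (k + l)

/-- The companion matrix of a (monic, degree `s`) polynomial
`F = X^s + a_{s-1} X^{s-1} + ⋯ + a_0`: ones on the superdiagonal and last row
`(-a_0, …, -a_{s-1})`. -/
noncomputable def companionM (F : Polynomial ℤ) (s : ℕ) : Matrix (Fin s) (Fin s) ℤ :=
  fun i j => if (i : ℕ) = s - 1 then -F.coeff j
    else if (j : ℕ) = (i : ℕ) + 1 then 1 else 0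

/-- The Jacobian group of the I-graph `I(n,k,l)`: the torsion subgroup of the cokernel of
the Laplacian. -/
noncomputable def JacI (n k l : ℕ) [NeZero n] : AddSubgroup (cokerM (lapI n k l ℤ)) :=
  AddCommGroup.torsion (cokerM (lapI n k l ℤ))

section LaplacianFormula

variable {n k l : ℕ}

theorem natCast_zmod_ne_zero_of_two_mul_lt {m : ℕ} (hm : 1 ≤ m) (hn : 2 * m < n) :
    (m : ZMod n) ≠ 0 ∧ (m : ZMod n) + m ≠ 0 := by
  constructor
  · intro h
    rw [ZMod.natCast_eq_zero_iff] at h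
    have := Nat.le_of_dvd (by omega) h
    omega
  · intro h
    have h' : ((2 * m : ℕ) : ZMod n) = 0 := by push_cast; linear_combination h
    rw [ZMod.natCast_eq_zero_iff] at h'
    have := Nat.le_of_dvd (by omega) h'
    omega

theorem lapI_mulVec_inl [NeZero n] (hl : 1 ≤ l) (hn : 2 * l < n)
    (f : ZMod n ⊕ ZMod n → ℤ) (i : ZMod n) :
    (lapI n k l ℤ).mulVec f (.inl i) =
      3 * f (.inl i) - f (.inl (i + l)) - f (.inl (i - l)) - f (.inr i) := by
  obtain ⟨h1, h2⟩ := natCast_zmod_ne_zero_of_two_mul_lt hl hn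
  have hN : (IGraph n k l).neighborFinset (.inl i) =
      {.inl (i + (l : ZMod n)), .inl (i - (l : ZMod n)), .inr i} := by
    ext (j | j)
    · rw [SimpleGraph.mem_neighborFinset, IGraph]
      simp only [SimpleGraph.fromRel_adj, IRel,
        Finset.mem_insert, Finset.mem_singleton, Sum.inl.injEq, ne_eq, reduceCtorEq, or_false]
      grind
    · rw [SimpleGraph.mem_neighborFinset, IGraph]
      simp only [SimpleGraph.fromRel_adj, IRel,
        Finset.mem_insert, Finset.mem_singleton, Sum.inr.injEq, ne_eq, reduceCtorEq, or_false,
        false_or, not_false_eq_true, true_and]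
      grind
  have hne : i + (l : ZMod n) ≠ i - l := fun h => h2 (by linear_combination h)
  rw [lapI, SimpleGraph.lapMatrix_mulVec_apply, ← SimpleGraph.card_neighborFinset_eq_degree, hN,
    Finset.card_insert_of_notMem (by simp [hne]), Finset.card_insert_of_notMem (by simp),
    Finset.sum_insert (by simp [hne]), Finset.sum_insert (by simp)]
  simp
  ring

theorem lapI_mulVec_inr [NeZero n] (hk : 1 ≤ k) (hn : 2 * k < n)
    (f : ZMod n ⊕ ZMod n → ℤ) (i : ZMod n) :
    (lapI n k l ℤ).mulVec f (.inr i) =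
      3 * f (.inr i) - f (.inr (i + k)) - f (.inr (i - k)) - f (.inl i) := by
  obtain ⟨h1, h2⟩ := natCast_zmod_ne_zero_of_two_mul_lt hk hn
  have hN : (IGraph n k l).neighborFinset (.inr i) =
      {.inr (i + (k : ZMod n)), .inr (i - (k : ZMod n)), .inl i} := by
    ext (j | j)
    · rw [SimpleGraph.mem_neighborFinset, IGraph]
      simp only [SimpleGraph.fromRel_adj, IRel,
        Finset.mem_insert, Finset.mem_singleton, Sum.inl.injEq, ne_eq, reduceCtorEq,
        false_or, not_false_eq_true, true_and]
    · rw [SimpleGraph.mem_neighborFinset, IGraph]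
      simp only [SimpleGraph.fromRel_adj, IRel,
        Finset.mem_insert, Finset.mem_singleton, Sum.inr.injEq, ne_eq, reduceCtorEq, or_false]
      grind
  have hne : i + (k : ZMod n) ≠ i - k := fun h => h2 (by linear_combination h)
  rw [lapI, SimpleGraph.lapMatrix_mulVec_apply, ← SimpleGraph.card_neighborFinset_eq_degree, hN,
    Finset.card_insert_of_notMem (by simp [hne]), Finset.card_insert_of_notMem (by simp),
    Finset.sum_insert (by simp [hne]), Finset.sum_insert (by simp)]
  simp
  ring

end LaplacianFormula

section MaximumPrinciple

variable {n k l : ℕ} [NeZero n]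

/-- A subset of `ℤ/nℤ` closed under translation by two coprime integers is everything. -/
theorem mem_of_add_mem_of_coprime (hcop : Nat.gcd k l = 1) {p : ZMod n → Prop}
    (hk : ∀ i, p i → p (i + k)) (hl : ∀ i, p i → p (i + l)) {i : ZMod n} (hi : p i)
    (j : ZMod n) : p j := by
  have iter : ∀ x : ZMod n, (∀ i, p i → p (i + x)) → ∀ c i : ZMod n, p i → p (i + c * x) := by
    intro x hx c i hi
    have : ∀ m : ℕ, p (i + m * x) := by
      intro m
      induction m with
      | zero => simpa using hi
      | succ m ih =>
        have := hx _ ih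
        push_cast
        convert this using 1
        ring
    simpa using this c.val
  have hb : (k : ZMod n) * (k.gcdA l : ℤ) + l * (k.gcdB l : ℤ) = 1 := by
    have h := Nat.gcd_eq_gcd_ab k l
    rw [hcop] at h
    exact_mod_cast (congrArg (Int.cast : ℤ → ZMod n) h).symm
  have := iter _ hl ((j - i) * (k.gcdB l : ℤ)) _ (iter _ hk ((j - i) * (k.gcdA l : ℤ)) _ hi)
  convert this using 1
  linear_combination (-(j - i)) * hb

/-- If the Laplacian of `f` is positive on at most two vertices, both among the `u_i`, with total
positive part at most `2`, then `f` is constant: the I-graph is `3`-edge-connected. -/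
theorem exists_const_of_lapI_mulVec_le (hk : 1 ≤ k) (hkl : k ≤ l) (hn : 2 * l < n)
    (hcop : Nat.gcd k l = 1) (f : ZMod n ⊕ ZMod n → ℤ) (a b : ZMod n)
    (hinr : ∀ i, (lapI n k l ℤ).mulVec f (.inr i) ≤ 0)
    (hinl : ∀ i, i ≠ a → i ≠ b → (lapI n k l ℤ).mulVec f (.inl i) ≤ 0)
    (hle_two : ∀ i, (lapI n k l ℤ).mulVec f (.inl i) ≤ 2)
    (hle_one : a ≠ b → ∀ i, (lapI n k l ℤ).mulVec f (.inl i) ≤ 1) :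
    ∃ c, ∀ v, f v = c := by
  obtain ⟨hk1, hk2⟩ := natCast_zmod_ne_zero_of_two_mul_lt (n := n) hk (by omega)
  obtain ⟨hl1, hl2⟩ := natCast_zmod_ne_zero_of_two_mul_lt (n := n) (hk.trans hkl) hn
  simp only [lapI_mulVec_inl (hk.trans hkl) hn] at hinl hle_two hle_one
  simp only [lapI_mulVec_inr (l := l) hk (by omega : 2 * k < n)] at hinr
  obtain ⟨w, hw⟩ := Finite.exists_max f
  refine ⟨f w, ?_⟩
  have stepV : ∀ i, f (.inr i) = f w →
      f (.inr (i + k)) = f w ∧ f (.inr (i - k)) = f w ∧ f (.inl i) = f w := by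
    intro i hi
    have := hinr i
    have h1 := hw (.inr (i + k))
    have h2 := hw (.inr (i - k))
    have h3 := hw (.inl i)
    omega
  have stepU : ∀ i, i ≠ a → i ≠ b → f (.inl i) = f w →
      f (.inl (i + l)) = f w ∧ f (.inl (i - l)) = f w ∧ f (.inr i) = f w := by
    intro i ha hb hi
    have := hinl i ha hb
    have h1 := hw (.inl (i + l))
    have h2 := hw (.inl (i - l))
    have h3 := hw (.inr i)
    omega
  have existsV : ∃ i, f (.inr i) = f w := by
    by_contra! hV
    have hU : ∀ i, f (.inl i) = f w → i = a ∨ i = b := by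
      intro i hi
      by_contra! h
      exact hV i (stepU i h.1 h.2 hi).2.2
    obtain ⟨i, hi⟩ : ∃ i, f (.inl i) = f w := by
      rcases hwe : w with i | i
      · exact ⟨i, rfl⟩
      · exact absurd (by rw [hwe]) (hV i)
    have h1 := hw (.inl (i + l))
    have h2 := hw (.inl (i - l))
    have h3 := lt_of_le_of_ne (hw (.inr i)) (hV i)
    have d1 : i + (l : ZMod n) ≠ i := by simpa using hl1
    have d2 : i - (l : ZMod n) ≠ i := by simpa using hl1
    have d3 : i + (l : ZMod n) ≠ i - l := fun h => hl2 (by linear_combination h)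
    have e0 := hU i hi
    have e1 := hU (i + l)
    have e2 := hU (i - l)
    by_cases hab : a = b
    · have := hle_two i
      have n1 : f (.inl (i + l)) ≠ f w := fun h => by grind
      have n2 : f (.inl (i - l)) ≠ f w := fun h => by grind
      omega
    · have := hle_one hab i
      have p1 : f (.inl (i + l)) = f w := by omega
      have p2 : f (.inl (i - l)) = f w := by omega
      grind
  have shiftV : ∀ i, f (.inr i) = f w → f (.inr (i + l)) = f w := by
    intro i hi
    by_contra hil
    have V1 := (stepV i hi).1
    have V2 := (stepV i hi).2.1
    have N1 : f (.inr (i + l + k)) ≠ f w := fun h => hil (by simpa using (stepV _ h).2.1)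
    have N2 : f (.inr (i + l - k)) ≠ f w := fun h => hil (by simpa using (stepV _ h).1)
    have exc : ∀ j, f (.inr j) = f w → f (.inr (j + l)) ≠ f w →
        ∃ x, (x = a ∨ x = b) ∧ (x = j ∨ x = j + l) := by
      intro j hj hjl
      by_contra! h
      have hj' : j ≠ a ∧ j ≠ b := by grind
      have hjl' : j + (l : ZMod n) ≠ a ∧ j + (l : ZMod n) ≠ b := by grind
      exact hjl (stepU _ hjl'.1 hjl'.2 (stepU j hj'.1 hj'.2 (stepV j hj).2.2).1).2.2
    have c1 : i + (k : ZMod n) + l = i + l + k := by ring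
    have c2 : i - (k : ZMod n) + l = i + l - k := by ring
    obtain ⟨x, hx, hx'⟩ := exc i hi hil
    obtain ⟨y, hy, hy'⟩ := exc _ V1 (by rwa [c1])
    obtain ⟨z, hz, hz'⟩ := exc _ V2 (by rwa [c2])
    rw [c1] at hy'
    rw [c2] at hz'
    have d1 : i + (k : ZMod n) ≠ i := by simpa using hk1
    have d2 : i - (k : ZMod n) ≠ i := by simpa using hk1
    have d3 : i + (k : ZMod n) ≠ i - k := fun h => hk2 (by linear_combination h)
    have xy : x ≠ y := by
      rintro rfl
      rcases hx' with rfl | rfl <;> rcases hy' with h | h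
      · exact d1 h.symm
      · exact N1 (h ▸ hi)
      · exact hil (h ▸ V1)
      · exact hk1 (by linear_combination -h)
    have xz : x ≠ z := by
      rintro rfl
      rcases hx' with rfl | rfl <;> rcases hz' with h | h
      · exact d2 h.symm
      · exact N2 (h ▸ hi)
      · exact hil (h ▸ V2)
      · exact hk1 (by linear_combination h)
    have yz : y ≠ z := by
      rintro rfl
      rcases hy' with rfl | rfl <;> rcases hz' with h | h
      · exact d3 h
      · exact N2 (h ▸ V1)
      · exact N1 (h ▸ V2)
      · exact hk2 (by linear_combination h)
    clear * - hx hy hz xy xz yz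
    grind
  obtain ⟨i, hi⟩ := existsV
  have allV : ∀ j, f (.inr j) = f w :=
    mem_of_add_mem_of_coprime hcop (p := fun j => f (.inr j) = f w)
      (fun j hj => (stepV j hj).1) shiftV hi
  rintro (j | j)
  · exact (stepV j (allV j)).2.2
  · exact allV j

end MaximumPrinciple

section Torsion

/-- If an integer matrix has zero column sums and only constant vectors in its kernel, then
every vector of sum zero is torsion in the cokernel. -/
theorem exists_smul_eq_mulVec_of_sum_eq_zero {V : Type*} [Fintype V] [DecidableEq V] [Nonempty V]
    (L : Matrix V V ℤ) (hsum : ∀ f, ∑ v, L.mulVec f v = 0)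
    (hker : ∀ f, L.mulVec f = 0 → ∃ c, ∀ v, f v = c) (d : V → ℤ) (hd : ∑ v, d v = 0) :
    ∃ m : ℤ, m ≠ 0 ∧ ∃ f, L.mulVec f = m • d := by
  set M : Matrix V V ℤ := L + Matrix.of fun _ _ => 1 with hM
  have hMf : ∀ f v, M.mulVec f v = L.mulVec f v + ∑ w, f w := by
    intro f v
    rw [hM, Matrix.add_mulVec, Pi.add_apply]
    simp [Matrix.mulVec, dotProduct]
  have hzero : ∀ f, ∑ v, M.mulVec f v = 0 → ∑ w, f w = 0 := by
    intro f h
    simpa [hMf, Finset.sum_add_distrib, hsum] using h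
  refine ⟨M.det, ?_, M.adjugate.mulVec d, ?_⟩
  · intro hdet
    obtain ⟨f, hf, hMf0⟩ := Matrix.exists_mulVec_eq_zero_iff.mpr hdet
    have hs := hzero f (by simp [hMf0])
    obtain ⟨c, hc⟩ := hker f (by
      ext v
      have := hMf f v
      rw [hMf0, hs] at this
      simpa using this.symm)
    have hc0 : c = 0 := by simpa [hc] using hs
    exact hf (by ext v; simp [hc, hc0])
  · have h : M.mulVec (M.adjugate.mulVec d) = M.det • d := by
      rw [Matrix.mulVec_mulVec, Matrix.mul_adjugate, Matrix.smul_mulVec, Matrix.one_mulVec]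
    have hs := hzero (M.adjugate.mulVec d) (by simp [h, ← Finset.mul_sum, hd])
    ext v
    have := hMf (M.adjugate.mulVec d) v
    rw [h, hs] at this
    simpa using this.symm

theorem sum_lapI_mulVec (n k l : ℕ) [NeZero n] (f : ZMod n ⊕ ZMod n → ℤ) :
    ∑ v, (lapI n k l ℤ).mulVec f v = 0 := by
  have h : ∑ v, (lapI n k l ℤ).mulVec f v = (fun _ => 1) ⬝ᵥ (lapI n k l ℤ).mulVec f := by
    simp [dotProduct]
  rw [h, Matrix.dotProduct_mulVec, ← Matrix.mulVec_transpose, lapI,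
    (SimpleGraph.isSymm_lapMatrix ℤ _).eq, SimpleGraph.lapMatrix_mulVec_const_eq_zero,
    zero_dotProduct]

end Torsion

section CyclicAction

/-- If `τ` and `σ` are endomorphisms of an abelian group with `σ² = 1` and `(τσ)² = 1`, then `τ²`
is trivial on its torsion subgroup whenever that subgroup is cyclic. -/
theorem apply_apply_eq_self_of_cyclic_torsion {A : Type*} [AddCommGroup A] (τ σ : A →+ A)
    (hσ : ∀ x, σ (σ x) = x) (hτσ : ∀ x, τ (σ (τ (σ x))) = x)
    {x : AddCommGroup.torsion A} (hx : ∀ y, y ∈ AddSubgroup.zmultiples x)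
    {y : A} (hy : y ∈ AddCommGroup.torsion A) : τ (τ y) = y := by
  have gen : ∀ y ∈ AddCommGroup.torsion A, ∃ m : ℤ, y = m • (x : A) := by
    intro y hy
    obtain ⟨m, hm⟩ := AddSubgroup.mem_zmultiples_iff.mp (hx ⟨y, hy⟩)
    exact ⟨m, by simpa using (congrArg Subtype.val hm).symm⟩
  obtain ⟨a, ha⟩ := gen (τ x) (τ.isOfFinAddOrder x.2)
  obtain ⟨b, hb⟩ := gen (σ x) (σ.isOfFinAddOrder x.2)
  have h1 := hσ x
  have h2 := hτσ x
  simp only [hb, ha, map_zsmul] at h1 h2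
  obtain ⟨m, rfl⟩ := gen y hy
  have h3 : a • a • (x : A) = x := by
    conv_lhs => rw [← h1]
    conv_rhs => rw [← h2]
    simp only [smul_smul]
    congr 1
    ring
  simp only [ha, map_zsmul, h3]

end CyclicAction

section Symmetries

/-- The endomorphism of the cokernel of `M` induced by a map of coordinates commuting with `M`. -/
def cokerPerm {m : Type} [Fintype m] [DecidableEq m] (M : Matrix m m ℤ) (e : m → m)
    (h : ∀ f, M.mulVec f ∘ e = M.mulVec (f ∘ e)) : cokerM M →+ cokerM M :=
  (Submodule.mapQ _ _ (LinearMap.funLeft ℤ ℤ e) (by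
    rintro _ ⟨f, rfl⟩
    exact ⟨f ∘ e, (h f).symm⟩)).toAddMonoidHom

theorem cokerPerm_mk {m : Type} [Fintype m] [DecidableEq m] (M : Matrix m m ℤ) (e : m → m)
    (h : ∀ f, M.mulVec f ∘ e = M.mulVec (f ∘ e)) (f : m → ℤ) :
    cokerPerm M e h (Submodule.Quotient.mk f) = Submodule.Quotient.mk (f ∘ e) :=
  rfl

variable {n k l : ℕ} [NeZero n]

theorem lapI_mulVec_comp_add_one (hk : 1 ≤ k) (hkl : k ≤ l) (hn : 2 * l < n)
    (f : ZMod n ⊕ ZMod n → ℤ) :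
    (lapI n k l ℤ).mulVec f ∘ Sum.map (· + 1) (· + 1) =
      (lapI n k l ℤ).mulVec (f ∘ Sum.map (· + 1) (· + 1)) := by
  ext (i | i)
  · simp only [Function.comp_apply, Sum.map_inl, Sum.map_inr, lapI_mulVec_inl (hk.trans hkl) hn]
    ring_nf
  · simp only [Function.comp_apply, Sum.map_inl, Sum.map_inr,
      lapI_mulVec_inr (l := l) hk (by omega : 2 * k < n)]
    ring_nf

theorem lapI_mulVec_comp_neg (hk : 1 ≤ k) (hkl : k ≤ l) (hn : 2 * l < n)
    (f : ZMod n ⊕ ZMod n → ℤ) :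
    (lapI n k l ℤ).mulVec f ∘ Sum.map Neg.neg Neg.neg =
      (lapI n k l ℤ).mulVec (f ∘ Sum.map Neg.neg Neg.neg) := by
  ext (i | i)
  · simp only [Function.comp_apply, Sum.map_inl, Sum.map_inr, lapI_mulVec_inl (hk.trans hkl) hn]
    ring_nf
  · simp only [Function.comp_apply, Sum.map_inl, Sum.map_inr,
      lapI_mulVec_inr (l := l) hk (by omega : 2 * k < n)]
    ring_nf

end Symmetries

/-- The Jacobian group of the I-graph `I(n,k,l)` is not cyclic: no single element
`ℤ`-spans it. Hence its minimum number of generators is at least `2`. -/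
theorem jacobian_IGraph_not_cyclic (n k l : ℕ) [NeZero n]
    (hk : 1 ≤ k) (hkl : k ≤ l) (hn : 2 * l < n) (hcop : Nat.gcd k l = 1) :
    ¬ ∃ x : JacI n k l, ∀ y : JacI n k l, y ∈ AddSubgroup.zmultiples x := by
  rintro ⟨x, hx⟩
  have hne1 : (1 : ZMod n) ≠ 0 ∧ (2 : ZMod n) ≠ 0 := by
    have := natCast_zmod_ne_zero_of_two_mul_lt (n := n) (m := 1) le_rfl (by omega)
    norm_num at this
    exact this
  let τ := cokerPerm (lapI n k l ℤ) _ (lapI_mulVec_comp_add_one hk hkl hn)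
  let σ := cokerPerm (lapI n k l ℤ) _ (lapI_mulVec_comp_neg hk hkl hn)
  have hσ : ∀ y, σ (σ y) = y := by
    intro y
    obtain ⟨f, rfl⟩ := Submodule.Quotient.mk_surjective _ y
    simp only [σ, cokerPerm_mk]
    congr 1
    ext (i | i) <;> simp
  have hτσ : ∀ y, τ (σ (τ (σ y))) = y := by
    intro y
    obtain ⟨f, rfl⟩ := Submodule.Quotient.mk_surjective _ y
    simp only [τ, σ, cokerPerm_mk]
    congr 1
    ext (i | i) <;> simp
  let d : ZMod n ⊕ ZMod n → ℤ := Pi.single (.inl 0) 1 - Pi.single (.inl 1) 1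
  have hker : ∀ f, (lapI n k l ℤ).mulVec f = 0 → ∃ c, ∀ v, f v = c := fun f hf =>
    exists_const_of_lapI_mulVec_le hk hkl hn hcop f 0 0 (by simp [hf]) (by simp [hf])
      (by simp [hf]) (by simp)
  obtain ⟨m, hm, g, hg⟩ := exists_smul_eq_mulVec_of_sum_eq_zero _ (sum_lapI_mulVec n k l) hker d
    (by simp [d])
  have htors : (Submodule.Quotient.mk d : cokerM (lapI n k l ℤ)) ∈
      AddCommGroup.torsion (cokerM (lapI n k l ℤ)) := by
    refine isOfFinAddOrder_iff_zsmul_eq_zero.mpr ⟨m, hm, ?_⟩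
    rw [← Submodule.Quotient.mk_smul, Submodule.Quotient.mk_eq_zero]
    exact ⟨g, hg⟩
  have hfix := apply_apply_eq_self_of_cyclic_torsion τ σ hσ hτσ hx htors
  simp only [τ, cokerPerm_mk] at hfix
  obtain ⟨f, hf⟩ := (Submodule.Quotient.eq _).mp hfix
  rw [Matrix.mulVecLin_apply] at hf
  have hinl : ∀ i : ZMod n, (lapI n k l ℤ).mulVec f (.inl i) =
      (if i = -2 then 1 else 0) - (if i = -1 then 1 else 0) - (if i = 0 then 1 else 0) +
        (if i = 1 then 1 else 0) := by
    intro i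
    have e1 : i + 1 + 1 = 0 ↔ i = -2 := by grind
    have e2 : i + 1 + 1 = 1 ↔ i = -1 := by grind
    rw [hf]
    simp only [d, Pi.sub_apply, Function.comp_apply, Sum.map_inl, Pi.single_apply,
      Sum.inl.injEq, e1, e2]
    ring
  have hinr : ∀ i : ZMod n, (lapI n k l ℤ).mulVec f (.inr i) = 0 := by
    intro i
    rw [hf]
    simp [d]
  obtain ⟨c, hc⟩ := exists_const_of_lapI_mulVec_le hk hkl hn hcop f (-2) 1
    (fun i => (hinr i).le)
    (fun i h1 h2 => by rw [hinl, if_neg h1, if_neg h2]; split_ifs <;> norm_num)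
    (fun i => by rw [hinl]; split_ifs <;> norm_num)
    (fun hab i => by rw [hinl]; split_ifs <;> norm_num; exact hab (by simp_all))
  have h0 := hinl 0
  rw [lapI_mulVec_inl (hk.trans hkl) hn, hc, hc, hc, hc, if_pos rfl,
    if_neg (fun h => hne1.2 (by linear_combination h)),
    if_neg (fun h => hne1.1 (by linear_combination h)), if_neg hne1.1.symm] at h0
  omega
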